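/- arXiv:1505.00617 — 2 statements merged into one kernel-verified Lean document; each statement's English description precedes it below -/
import Mathlib

section
/- Let n ∈ ℕ and define ω : ℝ → ℝ^{2n+1} by ω(x) = (1, cos x, sin x, cos 2x, sin 2x, …, cos nx, sin nx). Then for all real numbers x_1 < x_2 < ⋯ < x_{2n+1}, the determinant Φ_ω(x_1,…,x_{2n+1}) = det(ω_i(x_j)) equals 4^{n²} · ∏_{1 ≤ k < j ≤ 2n+1} sin((x_j − x_k)/2). Consequently, if I is an open interval of length at most 2π, then ω is a (2n+1)-dimensional positive Chebyshev system over I. -/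
/-- `Phi ω x` is the determinant `det(ωᵢ(xⱼ))` of an `n`-tuple of functions
evaluated at an `n`-tuple of points. -/
noncomputable def Phi {n : ℕ} (ω : Fin n → ℝ → ℝ) (x : Fin n → ℝ) : ℝ :=
  (Matrix.of fun i j => ω i (x j)).det

/-- `ω` is an `n`-dimensional positive Chebyshev system over `H`:
`Phi ω` is positive on all strictly increasing `n`-tuples of elements of `H`. -/
def IsPosChebyshev {n : ℕ} (ω : Fin n → ℝ → ℝ) (H : Set ℝ) : Prop :=
  ∀ x : Fin n → ℝ, StrictMono x → (∀ j, x j ∈ H) → 0 < Phi ω x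

/-- The `(2n+1)`-dimensional trigonometric system
`(1, cos x, sin x, cos 2x, sin 2x, …, cos nx, sin nx)`:
index `0` is the constant `1`, index `2k−1` is `cos (k·x)`, index `2k` is `sin (k·x)`. -/
noncomputable def trigOmegaOdd (n : ℕ) : Fin (2 * n + 1) → ℝ → ℝ :=
  fun i x =>
    if (i : ℕ) = 0 then 1
    else if (i : ℕ) % 2 = 1 then Real.cos (((((i : ℕ) + 1) / 2 : ℕ) : ℝ) * x)
    else Real.sin ((((i : ℕ) / 2 : ℕ) : ℝ) * x)

/-! In the variables `exp (± i x / 2)`, the functions `exp (i l x)` with `-n ≤ l ≤ n` form a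
projective Vandermonde matrix, whose determinant is a product of the factors
`exp (i (x_j - x_k) / 2) - exp (-i (x_j - x_k) / 2) = 2 i sin ((x_j - x_k) / 2)`. By Euler's
formulas the trigonometric system is a constant matrix times this one. The frequencies
`0, 1, -1, 2, -2, …` are an even permutation of `-n, …, n` and each pair `(cos kx, sin kx)`
contributes a `2 × 2` determinant `i / 2`, so the constant matrix has determinant `(i / 2) ^ n`. -/

open Complex Matrix Finset

section Pairs

theorem prod_filter_fst_lt_snd {M : Type*} [CommMonoid M] {N : ℕ} (f : Fin N → Fin N → M) :
    ∏ p ∈ univ.filter (fun p : Fin N × Fin N => p.1 < p.2), f p.1 p.2 =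
      ∏ i, ∏ j ∈ Ioi i, f i j :=
  prod_finset_product' _ _ _ (by simp)

theorem sum_card_Ioi_fin (N : ℕ) : ∑ i : Fin N, #(Ioi i) = N.choose 2 := by
  simp only [Fin.card_Ioi]
  rw [Fin.sum_univ_eq_sum_range (fun i => N - 1 - i), sum_range_reflect (fun i => i),
    sum_range_id, Nat.choose_two_right]

theorem prod_prod_Ioi_const_mul {M : Type*} [CommMonoid M] {N : ℕ} (c : M)
    (f : Fin N → Fin N → M) :
    ∏ i, ∏ j ∈ Ioi i, c * f i j = c ^ N.choose 2 * ∏ i, ∏ j ∈ Ioi i, f i j := by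
  simp only [prod_mul_distrib, prod_const, prod_pow_eq_pow_sum, sum_card_Ioi_fin]

end Pairs

section HalfAngleVandermonde

/-- The projective Vandermonde matrix at the points `exp (i xⱼ / 2) : exp (-i xⱼ / 2)`, with rows
indexed by the points. Its entries are the exponentials `exp (i l xⱼ)`, where the frequency `l`
runs from `-(N - 1) / 2` to `(N - 1) / 2` in steps of `1`. -/
noncomputable def halfAngleVandermonde {N : ℕ} (x : Fin N → ℂ) : Matrix (Fin N) (Fin N) ℂ :=
  projVandermonde (fun j => exp (x j / 2 * I)) (fun j => exp (-(x j / 2) * I))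

theorem halfAngleVandermonde_apply {n : ℕ} (x : Fin (2 * n + 1) → ℂ) (j m : Fin (2 * n + 1)) :
    halfAngleVandermonde x j m = exp (((m - n : ℤ) : ℂ) * x j * I) := by
  have hm : ((m.rev : ℕ) : ℂ) = 2 * n - m := by
    rw [Fin.val_rev, Nat.cast_sub (by omega)]
    push_cast
    ring
  rw [halfAngleVandermonde, projVandermonde_apply, ← exp_nat_mul, ← exp_nat_mul, ← exp_add, hm]
  congr 1
  push_cast
  ring

theorem exp_mul_exp_sub_exp_mul_exp (a b : ℂ) :
    exp (b / 2 * I) * exp (-(a / 2) * I) - exp (a / 2 * I) * exp (-(b / 2) * I) =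
      2 * I * sin ((b - a) / 2) := by
  have hb : b / 2 * I + -(a / 2) * I = (b - a) / 2 * I := by ring
  have ha : a / 2 * I + -(b / 2) * I = -((b - a) / 2) * I := by ring
  rw [← exp_add, ← exp_add, hb, ha]
  linear_combination -I * two_sin ((b - a) / 2) -
    (exp (-((b - a) / 2) * I) - exp ((b - a) / 2 * I)) * I_mul_I

theorem det_halfAngleVandermonde {N : ℕ} (x : Fin N → ℂ) :
    (halfAngleVandermonde x).det =
      (2 * I) ^ N.choose 2 * ∏ i, ∏ j ∈ Ioi i, sin ((x j - x i) / 2) := by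
  rw [halfAngleVandermonde, det_projVandermonde]
  simp only [exp_mul_exp_sub_exp_mul_exp, prod_prod_Ioi_const_mul]

end HalfAngleVandermonde

section FourierCoefficients

/-- The coefficient of `exp (i l x)` in `cos kx`, as a function of `l`. -/
noncomputable def cosFourierCoeff (k : ℕ) : ℤ → ℂ :=
  (1 / 2 : ℂ) • (Pi.single (k : ℤ) 1 + Pi.single (-k : ℤ) 1)

/-- The coefficient of `exp (i l x)` in `sin kx`, as a function of `l`. -/
noncomputable def sinFourierCoeff (k : ℕ) : ℤ → ℂ :=
  (I / 2) • (Pi.single (-k : ℤ) 1 - Pi.single (k : ℤ) 1)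

theorem sum_single_mul {R : Type*} [NonAssocSemiring R] {n : ℕ} {l : ℤ} (hl : l.natAbs ≤ n)
    (f : ℤ → R) :
    ∑ m : Fin (2 * n + 1), (Pi.single l 1 : ℤ → R) (m - n) * f (m - n) = f l := by
  have hm : ((l + n).toNat : ℤ) - n = l := by omega
  rw [Fintype.sum_eq_single ⟨(l + n).toNat, by omega⟩]
  · rw [hm, Pi.single_eq_same, one_mul]
  · intro m hne
    have hml : (m - n : ℤ) ≠ l := fun h => hne (Fin.ext (by simp only; omega))
    rw [Pi.single_eq_of_ne hml, zero_mul]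

theorem sum_cosFourierCoeff_mul_exp {n k : ℕ} (hk : k ≤ n) (x : ℂ) :
    ∑ m : Fin (2 * n + 1), cosFourierCoeff k (m - n) * exp (((m - n : ℤ) : ℂ) * x * I) =
      cos (k * x) := by
  simp only [cosFourierCoeff, Pi.smul_apply, Pi.add_apply, smul_eq_mul, mul_assoc (1 / 2 : ℂ),
    add_mul, ← mul_sum, sum_add_distrib]
  rw [sum_single_mul (by omega) fun l => exp (l * x * I),
    sum_single_mul (by omega) fun l => exp (l * x * I), Complex.cos]
  push_cast
  ring_nf

theorem sum_sinFourierCoeff_mul_exp {n k : ℕ} (hk : k ≤ n) (x : ℂ) :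
    ∑ m : Fin (2 * n + 1), sinFourierCoeff k (m - n) * exp (((m - n : ℤ) : ℂ) * x * I) =
      sin (k * x) := by
  simp only [sinFourierCoeff, Pi.smul_apply, Pi.sub_apply, smul_eq_mul, mul_assoc (I / 2),
    sub_mul, ← mul_sum, sum_sub_distrib]
  rw [sum_single_mul (by omega) fun l => exp (l * x * I),
    sum_single_mul (by omega) fun l => exp (l * x * I), Complex.sin]
  push_cast
  ring_nf

theorem cosFourierCoeff_eq_zero {k : ℕ} {l : ℤ} (hl : l.natAbs ≠ k) : cosFourierCoeff k l = 0 := by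
  have hpos : l ≠ k := by omega
  have hneg : l ≠ -k := by omega
  simp [cosFourierCoeff, hpos, hneg]

theorem sinFourierCoeff_eq_zero {k : ℕ} {l : ℤ} (hl : l.natAbs ≠ k) : sinFourierCoeff k l = 0 := by
  have hpos : l ≠ k := by omega
  have hneg : l ≠ -k := by omega
  simp [sinFourierCoeff, hpos, hneg]

theorem cosFourierCoeff_natCast {k : ℕ} (hk : k ≠ 0) : cosFourierCoeff k k = 1 / 2 := by
  have hne : (k : ℤ) ≠ -k := by omega
  simp [cosFourierCoeff, hne]

theorem cosFourierCoeff_neg_natCast {k : ℕ} (hk : k ≠ 0) : cosFourierCoeff k (-k) = 1 / 2 := by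
  have hne : (k : ℤ) ≠ -k := by omega
  simp [cosFourierCoeff, hne.symm]

theorem sinFourierCoeff_natCast {k : ℕ} (hk : k ≠ 0) : sinFourierCoeff k k = -(I / 2) := by
  have hne : (k : ℤ) ≠ -k := by omega
  simp [sinFourierCoeff, hne]

theorem sinFourierCoeff_neg_natCast {k : ℕ} (hk : k ≠ 0) : sinFourierCoeff k (-k) = I / 2 := by
  have hne : (k : ℤ) ≠ -k := by omega
  simp [sinFourierCoeff, hne.symm]

/-- The coefficient of `exp (i l x)` in the `i`-th function of the sequence
`1, cos x, sin x, cos 2x, sin 2x, …`, as a function of `l`. -/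
noncomputable def trigFourierCoeff (i : ℕ) : ℤ → ℂ :=
  if i = 0 then cosFourierCoeff 0
  else if i % 2 = 1 then cosFourierCoeff ((i + 1) / 2)
  else sinFourierCoeff (i / 2)

theorem trigFourierCoeff_two_mul_add_one (k : ℕ) :
    trigFourierCoeff (2 * k + 1) = cosFourierCoeff (k + 1) := by
  rw [trigFourierCoeff, if_neg (by omega), if_pos (by omega)]
  congr 1
  omega

theorem trigFourierCoeff_two_mul_add_two (k : ℕ) :
    trigFourierCoeff (2 * k + 2) = sinFourierCoeff (k + 1) := by
  rw [trigFourierCoeff, if_neg (by omega), if_neg (by omega)]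
  congr 1
  omega

theorem trigFourierCoeff_eq_zero {i : ℕ} {l : ℤ} (hl : l.natAbs ≠ (i + 1) / 2) :
    trigFourierCoeff i l = 0 := by
  unfold trigFourierCoeff
  split_ifs
  · exact cosFourierCoeff_eq_zero (by omega)
  · exact cosFourierCoeff_eq_zero hl
  · exact sinFourierCoeff_eq_zero (by omega)

theorem ofReal_trigOmegaOdd_eq_sum {n : ℕ} (i : Fin (2 * n + 1)) (x : ℝ) :
    (trigOmegaOdd n i x : ℂ) =
      ∑ m : Fin (2 * n + 1), trigFourierCoeff i (m - n) * exp (((m - n : ℤ) : ℂ) * x * I) := by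
  unfold trigOmegaOdd trigFourierCoeff
  split_ifs
  · rw [sum_cosFourierCoeff_mul_exp n.zero_le]
    simp
  · rw [sum_cosFourierCoeff_mul_exp (by omega), ofReal_cos, ofReal_mul, ofReal_natCast]
  · rw [sum_sinFourierCoeff_mul_exp (by omega), ofReal_sin, ofReal_mul, ofReal_natCast]

end FourierCoefficients

section FourierMatrix

/-- The coefficients of `1, cos x, sin x, …, cos nx, sin nx` (rows) with respect to the
exponentials `exp (i l x)`, `-n ≤ l ≤ n` (columns); the column index is `l + n`. -/
noncomputable def trigFourierMatrix (n : ℕ) : Matrix (Fin (2 * n + 1)) (Fin (2 * n + 1)) ℂ :=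
  of fun i m => trigFourierCoeff i (m - n)

theorem map_ofReal_trigOmegaOdd {n : ℕ} (x : Fin (2 * n + 1) → ℝ) :
    (of fun i j => trigOmegaOdd n i (x j)).map ofReal =
      trigFourierMatrix n * (halfAngleVandermonde fun j => (x j : ℂ))ᵀ := by
  ext i j
  simp only [map_apply, of_apply, mul_apply, transpose_apply, trigFourierMatrix,
    halfAngleVandermonde_apply, ofReal_trigOmegaOdd_eq_sum]

theorem det_submatrix_finRotate_odd {R : Type*} [CommRing R] (n : ℕ)
    (A : Matrix (Fin (2 * n + 1)) (Fin (2 * n + 1)) R) :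
    (A.submatrix id (finRotate (2 * n + 1))).det = A.det := by
  simp [det_permute', sign_finRotate]

/-- The coefficients of `cos kx` and `sin kx` (rows) with respect to `exp (i k x)` and
`exp (-i k x)` (columns), for any `k ≠ 0`. -/
noncomputable def eulerBlock : Matrix (Fin 2) (Fin 2) ℂ :=
  !![1 / 2, 1 / 2; -(I / 2), I / 2]

theorem det_eulerBlock : eulerBlock.det = I / 2 := by
  rw [eulerBlock, det_fin_two_of]
  ring

theorem trigFourierCoeff_eq_eulerBlock (n : ℕ) (i j : Fin 2) :
    trigFourierCoeff (2 * n + 1 + i) (![((n + 1 : ℕ) : ℤ), -(n + 1 : ℕ)] j) = eulerBlock i j := by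
  have hk : n + 1 ≠ 0 := n.succ_ne_zero
  fin_cases i
  · change trigFourierCoeff (2 * n + 1) _ = _
    rw [trigFourierCoeff_two_mul_add_one]
    fin_cases j
    exacts [cosFourierCoeff_natCast hk, cosFourierCoeff_neg_natCast hk]
  · change trigFourierCoeff (2 * n + 2) _ = _
    rw [trigFourierCoeff_two_mul_add_two]
    fin_cases j
    exacts [sinFourierCoeff_natCast hk, sinFourierCoeff_neg_natCast hk]

-- Rotating the columns moves the lowest frequency `-(n + 1)` behind the highest one, `n + 1`.
theorem trigFourierMatrix_succ_submatrix (n : ℕ) :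
    ((trigFourierMatrix (n + 1)).submatrix id (finRotate (2 * (n + 1) + 1))).submatrix
        (finSumFinEquiv (m := 2 * n + 1) (n := 2)) (finSumFinEquiv (m := 2 * n + 1) (n := 2)) =
      fromBlocks (trigFourierMatrix n) 0 0 eulerBlock := by
  have freq_inner (j : Fin (2 * n + 1)) :
      ((finRotate (2 * n + 3) (j.castAdd 2) : ℕ) : ℤ) - (n + 1 : ℕ) = j - n := by
    have hne : j.castAdd 2 ≠ Fin.last (2 * n + 2) :=
      Fin.ne_of_val_ne (by rw [Fin.val_castAdd, Fin.val_last]; omega)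
    rw [coe_finRotate_of_ne_last hne, Fin.val_castAdd]
    omega
  have freq_outer (j : Fin 2) :
      ((finRotate (2 * n + 3) (j.natAdd (2 * n + 1)) : ℕ) : ℤ) - (n + 1 : ℕ) =
        ![((n + 1 : ℕ) : ℤ), -(n + 1 : ℕ)] j := by
    rw [coe_finRotate]
    fin_cases j
    · simp only [Fin.ext_iff, Fin.val_natAdd, Fin.val_last, cons_val_zero, Fin.zero_eta,
        Fin.val_zero]
      rw [if_neg (by omega)]
      omega
    · simp [Fin.ext_iff]
  have natAbs_freq_outer (j : Fin 2) :
      (![((n + 1 : ℕ) : ℤ), -(n + 1 : ℕ)] j).natAbs = n + 1 := by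
    fin_cases j
    exacts [Int.natAbs_natCast _, Int.natAbs_neg _]
  ext (i | i) (j | j)
  · exact congrArg (trigFourierCoeff i) (freq_inner j)
  · refine (congrArg (trigFourierCoeff i) (freq_outer j)).trans (trigFourierCoeff_eq_zero ?_)
    rw [natAbs_freq_outer]
    omega
  · refine (congrArg (trigFourierCoeff (2 * n + 1 + i)) (freq_inner j)).trans
      (trigFourierCoeff_eq_zero ?_)
    omega
  · exact (congrArg (trigFourierCoeff (2 * n + 1 + i)) (freq_outer j)).trans
      (trigFourierCoeff_eq_eulerBlock n i j)

theorem det_trigFourierMatrix (n : ℕ) : (trigFourierMatrix n).det = (I / 2) ^ n := by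
  induction n with
  | zero =>
    refine (det_fin_one _).trans ?_
    norm_num [trigFourierMatrix, trigFourierCoeff, cosFourierCoeff]
  | succ n ih =>
    calc (trigFourierMatrix (n + 1)).det
        = (fromBlocks (trigFourierMatrix n) 0 0 eulerBlock).det := by
          rw [← trigFourierMatrix_succ_submatrix, det_submatrix_equiv_self,
            det_submatrix_finRotate_odd]
      _ = (I / 2) ^ (n + 1) := by
          rw [det_fromBlocks_zero₂₁, ih, det_eulerBlock, pow_succ]

end FourierMatrix

theorem I_div_two_pow_mul_two_I_pow (n : ℕ) :
    (I / 2) ^ n * (2 * I) ^ (2 * n + 1).choose 2 = 4 ^ n ^ 2 := by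
  have hchoose : (2 * n + 1).choose 2 = n * (2 * n + 1) := by
    rw [Nat.choose_two_right, Nat.add_sub_cancel]
    exact Nat.div_eq_of_eq_mul_left two_pos (by ring)
  have hI : I / 2 * (2 * I) = -1 := by linear_combination I_mul_I
  have hI_sq : (2 * I) ^ 2 = -4 := by linear_combination 4 * I_sq
  calc (I / 2) ^ n * (2 * I) ^ (2 * n + 1).choose 2
      = (I / 2 * (2 * I) * ((2 * I) ^ 2) ^ n) ^ n := by
        rw [hchoose, mul_comm n, pow_mul, ← mul_pow, pow_succ, pow_mul]
        ring
    _ = (-1) ^ (n * (n + 1)) * 4 ^ n ^ 2 := by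
        rw [hI, hI_sq, neg_pow 4 n]
        ring
    _ = 4 ^ n ^ 2 := by
        rw [(Nat.even_mul_succ_self n).neg_one_pow, one_mul]

theorem Phi_trigOmegaOdd (n : ℕ) (x : Fin (2 * n + 1) → ℝ) :
    Phi (trigOmegaOdd n) x =
      4 ^ n ^ 2 * ∏ i, ∏ j ∈ Ioi i, Real.sin ((x j - x i) / 2) := by
  apply ofReal_injective
  calc (Phi (trigOmegaOdd n) x : ℂ)
      = ((of fun i j => trigOmegaOdd n i (x j)).map ofReal).det := ofRealHom.map_det _
    _ = (I / 2) ^ n * ((2 * I) ^ (2 * n + 1).choose 2 *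
          ∏ i, ∏ j ∈ Ioi i, sin (((x j : ℂ) - x i) / 2)) := by
        rw [map_ofReal_trigOmegaOdd, det_mul, det_transpose, det_trigFourierMatrix,
          det_halfAngleVandermonde]
    _ = _ := by
        rw [← mul_assoc, I_div_two_pow_mul_two_I_pow]
        push_cast
        rfl

theorem isPosChebyshev_trigOmegaOdd (n : ℕ) {H : Set ℝ}
    (hH : ∀ s ∈ H, ∀ t ∈ H, t - s < 2 * Real.pi) : IsPosChebyshev (trigOmegaOdd n) H := by
  intro x hx hxH
  rw [Phi_trigOmegaOdd]
  refine mul_pos (by positivity) (prod_pos fun i _ => prod_pos fun j hij => ?_)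
  have hlt : x i < x j := hx (mem_Ioi.mp hij)
  have hdist : x j - x i < 2 * Real.pi := hH _ (hxH i) _ (hxH j)
  exact Real.sin_pos_of_pos_of_lt_pi (by linarith) (by linarith)

theorem trigOmegaOdd_det_and_posChebyshev_general (n : ℕ) :
    (∀ x : Fin (2 * n + 1) → ℝ,
      Phi (trigOmegaOdd n) x =
        (4 : ℝ) ^ (n ^ 2) *
          ∏ p ∈ Finset.univ.filter
              (fun p : Fin (2 * n + 1) × Fin (2 * n + 1) => p.1 < p.2),
            Real.sin ((x p.2 - x p.1) / 2)) ∧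
    ∀ H : Set ℝ, (∀ s ∈ H, ∀ t ∈ H, t - s < 2 * Real.pi) →
      IsPosChebyshev (trigOmegaOdd n) H :=
  ⟨fun x => by rw [Phi_trigOmegaOdd, prod_filter_fst_lt_snd fun i j => Real.sin ((x j - x i) / 2)],
    fun _ => isPosChebyshev_trigOmegaOdd n⟩

/-- The determinant of the `(2n+1)`-dimensional trigonometric system
`(1, cos x, sin x, …, cos nx, sin nx)` at `x₁ < ⋯ < x_{2n+1}` equals
`4^(n²) · ∏_{k<j} sin((xⱼ − xₖ)/2)`; consequently this system is a positive
Chebyshev system over any open interval of length at most `2π`. -/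
theorem trigOmegaOdd_det_and_posChebyshev (n : ℕ) (hn : 0 < n) :
    (∀ x : Fin (2 * n + 1) → ℝ, StrictMono x →
      Phi (trigOmegaOdd n) x =
        (4 : ℝ) ^ (n ^ 2) *
          ∏ p ∈ Finset.univ.filter
              (fun p : Fin (2 * n + 1) × Fin (2 * n + 1) => p.1 < p.2),
            Real.sin ((x p.2 - x p.1) / 2)) ∧
    ∀ a b : ℝ, b - a ≤ 2 * Real.pi →
      IsPosChebyshev (trigOmegaOdd n) (Set.Ioo a b) := by
  obtain ⟨det_eq, pos⟩ := trigOmegaOdd_det_and_posChebyshev_general n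
  exact ⟨fun x _ => det_eq x, fun a b hab => pos _ fun s hs t ht => by linarith [hs.1, ht.2]⟩
end

section
/- Let n ∈ ℕ and define ω : ℝ → ℝ^{2n} by ω(x) = (cos x, sin x, cos 2x, sin 2x, …, cos nx, sin nx). If I is an open interval of length at most π, then ω is a (2n)-dimensional positive Chebyshev system over I; that is, for all x_1 < x_2 < ⋯ < x_{2n} in I, the determinant Φ_ω(x_1,…,x_{2n}) = det(ω_i(x_j)) is positive. -/
/-- The `2n`-dimensional trigonometric system
`(cos x, sin x, cos 2x, sin 2x, …, cos nx, sin nx)`: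
index `2k` is `cos ((k+1)·x)`, index `2k+1` is `sin ((k+1)·x)`. -/
noncomputable def trigOmegaEven (n : ℕ) : Fin (2 * n) → ℝ → ℝ :=
  fun i x =>
    if (i : ℕ) % 2 = 0 then Real.cos (((((i : ℕ) / 2 + 1) : ℕ) : ℝ) * x)
    else Real.sin (((((i : ℕ) / 2 + 1) : ℕ) : ℝ) * x)

/-!
Put `z j = exp (x j * I)`. Passing from cosines and sines to exponentials turns `det (ω i (x j))`
into the determinant of the powers `z j ^ k`, `0 ≤ k ≤ 2n`, `k ≠ n`, that is, into the Vandermonde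
determinant of `z` times the elementary symmetric polynomial `e n (z)`. After removing phases, the
former is a product of the positive numbers `sin ((x j - x i) / 2)`, `i < j`, and the latter is the
real number `∑ S, cos ((∑ j ∈ S, x j - ∑ j ∉ S, x j) / 2)`, where `S` runs over the `n`-subsets of
the `2n` indices. When all `x j` lie in an open interval of length `π`, the `z j` lie in an open
half-plane bounded by a line through `0`, so `e n (z) ≠ 0` by the Gauss–Lucas theorem. Hence the
sum of cosines keeps a constant sign on the connected set of such `x`, and it is positive when all
`x j` coincide.
-/

open Finset Matrix Polynomial

section GaussLucas

theorem rootSet_derivative_subset_convexHull (p : ℂ[X]) :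
    (derivative p).rootSet ℂ ⊆ convexHull ℝ (p.rootSet ℂ) := by
  rcases lt_or_ge 0 p.degree with hp | hp
  · exact rootSet_derivative_subset_convexHull_rootSet hp
  · rw [eq_C_of_degree_le_zero hp]
    simp

theorem rootSet_iterate_derivative_subset_convexHull (p : ℂ[X]) (k : ℕ) :
    (derivative^[k] p).rootSet ℂ ⊆ convexHull ℝ (p.rootSet ℂ) := by
  induction k with
  | zero => exact subset_convexHull ℝ _
  | succ k ih =>
    rw [Function.iterate_succ_apply']
    exact (rootSet_derivative_subset_convexHull _).trans
      (convexHull_min ih (convex_convexHull ℝ _))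

theorem coeff_ne_zero_of_rootSet_subset {p : ℂ[X]} {K : Set ℂ} (hK : Convex ℝ K) (h0 : 0 ∉ K)
    (hp : p.rootSet ℂ ⊆ K) {k : ℕ} (hk : k ≤ p.natDegree) (hp0 : p ≠ 0) : p.coeff k ≠ 0 := by
  intro hcoeff
  have hne : derivative^[k] p ≠ 0 := fun h ↦ by
    have hlead := coeff_iterate_derivative (k := k) p (p.natDegree - k)
    rw [h, Nat.sub_add_cancel hk, coeff_zero, eq_comm, smul_eq_zero] at hlead
    exact hlead.elim (by simpa [Nat.descFactorial_eq_zero_iff_lt] using hk) (by simpa using hp0)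
  have hroot : (0 : ℂ) ∈ (derivative^[k] p).rootSet ℂ := by
    rw [mem_rootSet, coe_aeval_eq_eval, ← coeff_zero_eq_eval_zero, coeff_iterate_derivative]
    simp [hne, hcoeff]
  exact h0 (convexHull_min hp hK (rootSet_iterate_derivative_subset_convexHull p k hroot))

theorem esymm_ne_zero_of_convex {s : Multiset ℂ} {K : Set ℂ} (hK : Convex ℝ K) (h0 : 0 ∉ K)
    (hs : ∀ z ∈ s, z ∈ K) {k : ℕ} (hk : k ≤ s.card) : s.esymm k ≠ 0 := by
  set p := (s.map fun z ↦ X - C z).prod with hp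
  have hp0 : p ≠ 0 := (monic_multiset_prod_of_monic _ _ fun z _ ↦ monic_X_sub_C z).ne_zero
  have hdeg : p.natDegree = s.card := natDegree_multiset_prod_X_sub_C_eq_card s
  have hroots : p.rootSet ℂ ⊆ K := fun z hz ↦ hs z <| by
    simpa [hp, mem_rootSet, eval_multiset_prod, sub_eq_zero] using (mem_rootSet.mp hz).2
  have hcoeff : p.coeff (s.card - k) ≠ 0 :=
    coeff_ne_zero_of_rootSet_subset hK h0 hroots (hdeg ▸ s.card.sub_le k) hp0
  rw [hp, Multiset.prod_X_sub_C_coeff s (s.card.sub_le k), Nat.sub_sub_self hk] at hcoeff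
  exact right_ne_zero_of_mul hcoeff

theorem convex_setOf_re_mul_pos (w : ℂ) : Convex ℝ {z : ℂ | 0 < (w * z).re} :=
  (convex_halfSpace_re_gt 0).linear_preimage (LinearMap.mulLeft ℝ w)

end GaussLucas

section Vandermonde

variable {R : Type*} [CommRing R] {m : ℕ}

-- The two minus signs cancel the alternating signs of the Laplace expansion along the row of `-X`.
theorem det_vandermonde_cons_neg_X (z : Fin m → R) :
    (vandermonde (Fin.cons (-X) fun j ↦ C (z j) : Fin (m + 1) → R[X])).det =
      ∑ k : Fin (m + 1),
        C (Matrix.of fun i j ↦ z j ^ (k.succAbove i : ℕ)).det * X ^ (k : ℕ) := by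
  rw [det_succ_row_zero]
  refine sum_congr rfl fun k _ ↦ ?_
  have hminor : (vandermonde (Fin.cons (-X) fun j ↦ C (z j) : Fin (m + 1) → R[X])).submatrix
      Fin.succ k.succAbove =
        (C.mapMatrix (Matrix.of fun i j ↦ z j ^ (k.succAbove i : ℕ)))ᵀ := by
    ext1 i j
    rw [submatrix_apply, vandermonde_apply, Fin.cons_succ]
    simp
  rw [hminor, det_transpose, ← RingHom.map_det, vandermonde_apply, Fin.cons_zero, ← mul_pow,
    neg_one_mul, neg_neg, mul_comm]

theorem det_pow_succAbove (z : Fin m → R) (k : Fin (m + 1)) :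
    (Matrix.of fun i j ↦ z j ^ (k.succAbove i : ℕ)).det =
      (vandermonde z).det * (univ.val.map z).esymm (m - k) := by
  have hprod : (vandermonde (Fin.cons (-X) fun j ↦ C (z j) : Fin (m + 1) → R[X])).det =
      C (vandermonde z).det * ∏ j, (X + C (z j)) := by
    rw [det_vandermonde, det_vandermonde, Fin.prod_univ_succ, mul_comm]
    simp [add_comm]
  have hcoeff := congrArg (coeff · k) ((det_vandermonde_cons_neg_X z).symm.trans hprod)
  have hk : (k : ℕ) ≤ #(univ : Finset (Fin m)) := by simpa using k.is_le
  rw [esymm_map_val]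
  simpa [finsetSum_coeff, coeff_X_pow, Fin.val_inj, Finset.prod_X_add_C_coeff _ _ hk]
    using hcoeff

end Vandermonde

section Frequencies

variable {n : ℕ}

/-- The frequencies `-1, 1, -2, 2, -3, 3, …` of the exponentials that replace
`cos x, sin x, cos 2x, sin 2x, …`, in the order of `trigOmegaEven`. -/
def alternatingFreq (i : ℕ) : ℤ :=
  if i % 2 = 0 then -(i / 2 + 1 : ℕ) else (i / 2 + 1 : ℕ)

/-- The permutation that lists the frequencies `-1, 1, …, -n, n` in increasing order: `zigzagPerm i`
is the rank of `alternatingFreq i`. -/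
def zigzagPerm (n : ℕ) : Equiv.Perm (Fin (2 * n)) where
  toFun i := ⟨if (i : ℕ) % 2 = 0 then n - 1 - i / 2 else n + i / 2, by split_ifs <;> lia⟩
  invFun k := ⟨if (k : ℕ) < n then 2 * (n - 1 - k) else 2 * (k - n) + 1, by split_ifs <;> lia⟩
  left_inv i := by ext; dsimp only; split_ifs <;> lia
  right_inv k := by ext; dsimp only; split_ifs <;> lia

theorem val_zigzagPerm (i : Fin (2 * n)) :
    (zigzagPerm n i : ℕ) = if (i : ℕ) % 2 = 0 then n - 1 - i / 2 else n + i / 2 :=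
  rfl

theorem zigzagPerm_lt_zigzagPerm_iff {i j : Fin (2 * n)} (hij : i < j) :
    zigzagPerm n i < zigzagPerm n j ↔ (j : ℕ) % 2 = 1 := by
  rw [Fin.lt_def] at hij ⊢
  rw [val_zigzagPerm, val_zigzagPerm]
  split_ifs <;> lia

-- An even `j` forms an inversion with each of the `j` smaller indices, an odd `j` with none.
theorem sign_zigzagPerm (n : ℕ) : Equiv.Perm.sign (zigzagPerm n) = 1 := by
  rw [Equiv.Perm.sign_eq_prod_prod_Iio]
  refine prod_eq_one fun j _ ↦ ?_
  have hinv : ∀ i ∈ Iio j, (if zigzagPerm n i < zigzagPerm n j then (1 : ℤˣ) else -1) =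
      if (j : ℕ) % 2 = 1 then 1 else -1 := fun i hi ↦ by
    simp only [zigzagPerm_lt_zigzagPerm_iff (mem_Iio.mp hi)]
  rw [prod_congr rfl hinv, prod_const, Fin.card_Iio]
  split_ifs with hj
  · exact one_pow _
  · exact (Nat.even_iff.mpr (by lia)).neg_one_pow

theorem natCast_succAbove_zigzagPerm (k : Fin (2 * n + 1)) (hk : (k : ℕ) = n) (i : Fin (2 * n)) :
    ((k.succAbove (zigzagPerm n i) : ℕ) : ℤ) = n + alternatingFreq i := by
  simp only [Fin.succAbove, Fin.lt_def, Fin.val_castSucc, alternatingFreq, hk, val_zigzagPerm]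
  split_ifs <;> simp only [Fin.val_castSucc, Fin.val_succ, val_zigzagPerm] <;> split_ifs <;> lia

theorem det_zpow_alternatingFreq {K : Type*} [Field K] (z : Fin (2 * n) → K) (hz : ∀ j, z j ≠ 0) :
    (Matrix.of fun i j : Fin (2 * n) ↦ z j ^ alternatingFreq i).det =
      (∏ j, z j ^ n)⁻¹ * ((vandermonde z).det * (univ.val.map z).esymm n) := by
  let k : Fin (2 * n + 1) := ⟨n, by lia⟩
  let M : Matrix (Fin (2 * n)) (Fin (2 * n)) K := .of fun i j ↦ z j ^ (k.succAbove i : ℕ)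
  have hshift : (Matrix.of fun i j : Fin (2 * n) ↦ z j ^ alternatingFreq i) =
      .of fun i j ↦ (z j ^ n)⁻¹ * M.submatrix (zigzagPerm n) id i j := by
    ext i j
    simp only [M, of_apply, submatrix_apply, id_eq]
    rw [← zpow_natCast _ (k.succAbove _ : ℕ), natCast_succAbove_zigzagPerm k rfl,
      zpow_add₀ (hz j), zpow_natCast, inv_mul_cancel_left₀ (pow_ne_zero n (hz j))]
  rw [hshift, det_mul_row, det_permute, sign_zigzagPerm, det_pow_succAbove, prod_inv_distrib]
  simp [k, two_mul]

end Frequencies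

section CosSinToExp

variable {n : ℕ}

/-- The equivalence `(a, k) ↦ 2 * k + a`, which groups the index `2k` of a cosine with the
index `2k + 1` of the sine of the same frequency. -/
def evenOddEquiv (n : ℕ) : Fin 2 × Fin n ≃ Fin (2 * n) :=
  (Equiv.prodComm _ _).trans (finProdFinEquiv.trans (finCongr (mul_comm n 2)))

theorem val_evenOddEquiv (a : Fin 2) (k : Fin n) : (evenOddEquiv n (a, k) : ℕ) = 2 * k + a := by
  simp [evenOddEquiv, add_comm]

theorem alternatingFreq_evenOddEquiv_zero (k : Fin n) :
    alternatingFreq (evenOddEquiv n (0, k)) = -(k + 1 : ℕ) := by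
  simp [alternatingFreq, val_evenOddEquiv]

theorem alternatingFreq_evenOddEquiv_one (k : Fin n) :
    alternatingFreq (evenOddEquiv n (1, k)) = (k + 1 : ℕ) := by
  simp [alternatingFreq, val_evenOddEquiv, Nat.add_mod, Nat.mul_add_div]

theorem trigOmegaEven_evenOddEquiv_zero (k : Fin n) (x : ℝ) :
    trigOmegaEven n (evenOddEquiv n (0, k)) x = Real.cos ((k + 1 : ℕ) * x) := by
  simp [trigOmegaEven, val_evenOddEquiv]

theorem trigOmegaEven_evenOddEquiv_one (k : Fin n) (x : ℝ) :
    trigOmegaEven n (evenOddEquiv n (1, k)) x = Real.sin ((k + 1 : ℕ) * x) := by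
  simp [trigOmegaEven, val_evenOddEquiv, Nat.add_mod, Nat.mul_add_div]

/-- The matrix that expresses `(cos t, sin t)` through `(exp (-it), exp (it))`. -/
noncomputable def eulerMatrix : Matrix (Fin 2) (Fin 2) ℂ :=
  !![1 / 2, 1 / 2; Complex.I / 2, -Complex.I / 2]

theorem det_eulerMatrix : eulerMatrix.det = (2 * Complex.I)⁻¹ := by
  rw [eulerMatrix, det_fin_two_of, mul_inv, Complex.inv_I]
  ring

theorem trigOmegaEven_evenOddEquiv (a : Fin 2) (k : Fin n) (x : ℝ) :
    (trigOmegaEven n (evenOddEquiv n (a, k)) x : ℂ) =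
      ∑ b, eulerMatrix a b *
        Complex.exp (x * Complex.I) ^ alternatingFreq (evenOddEquiv n (b, k)) := by
  have hcos (t : ℂ) : Complex.cos t =
      1 / 2 * Complex.exp (-t * Complex.I) + 1 / 2 * Complex.exp (t * Complex.I) := by
    rw [Complex.cos]
    ring
  have hsin (t : ℂ) : Complex.sin t = Complex.I / 2 * Complex.exp (-t * Complex.I) +
      -Complex.I / 2 * Complex.exp (t * Complex.I) := by
    rw [Complex.sin]
    ring
  rw [Fin.sum_univ_two, alternatingFreq_evenOddEquiv_zero, alternatingFreq_evenOddEquiv_one,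
    ← Complex.exp_int_mul, ← Complex.exp_int_mul, Int.cast_neg, Int.cast_natCast, ← mul_assoc,
    ← mul_assoc, neg_mul]
  fin_cases a
  · exact (congrArg _ (trigOmegaEven_evenOddEquiv_zero k x)).trans
      (by push_cast; exact hcos _)
  · exact (congrArg _ (trigOmegaEven_evenOddEquiv_one k x)).trans
      (by push_cast; exact hsin _)

theorem ofReal_Phi_trigOmegaEven (x : Fin (2 * n) → ℝ) :
    (Phi (trigOmegaEven n) x : ℂ) = (2 * Complex.I)⁻¹ ^ n *
      (Matrix.of fun i j : Fin (2 * n) ↦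
        Complex.exp (x j * Complex.I) ^ alternatingFreq i).det := by
  have hblock : (blockDiagonal fun _ : Fin n ↦ eulerMatrix).det = (2 * Complex.I)⁻¹ ^ n := by
    simp [det_blockDiagonal, det_eulerMatrix]
  rw [Phi, ← Complex.ofRealHom_eq_coe, RingHom.map_det, ← hblock,
    ← det_submatrix_equiv_self (evenOddEquiv n), ← det_submatrix_equiv_self (evenOddEquiv n) (of _),
    ← det_mul]
  congr 1
  ext1 ⟨a, k⟩ q
  simp [mul_apply, Fintype.sum_prod_type, blockDiagonal_apply, trigOmegaEven_evenOddEquiv]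

end CosSinToExp

section SineProduct

theorem prod_univ_prod_Ioi_const {M : Type*} [CommMonoid M] (N : ℕ) (c : M) :
    ∏ i : Fin N, ∏ _j ∈ Ioi i, c = c ^ N.choose 2 := by
  simp only [prod_const, prod_pow_eq_pow_sum, Fin.card_Ioi]
  rw [Fin.sum_univ_eq_sum_range (fun i ↦ N - 1 - i), sum_range_reflect (fun i ↦ i), sum_range_id,
    Nat.choose_two_right]

theorem exp_mul_I_sub_exp_mul_I (x y : ℂ) :
    Complex.exp (y * Complex.I) - Complex.exp (x * Complex.I) =
      2 * Complex.I * (Complex.exp (x / 2 * Complex.I) * Complex.exp (y / 2 * Complex.I)) *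
        Complex.sin ((y - x) / 2) := by
  have hx : Complex.exp (x * Complex.I) = Complex.exp (x / 2 * Complex.I) *
      Complex.exp (y / 2 * Complex.I) * Complex.exp (-((y - x) / 2) * Complex.I) := by
    rw [← Complex.exp_add, ← Complex.exp_add]
    ring_nf
  have hy : Complex.exp (y * Complex.I) = Complex.exp (x / 2 * Complex.I) *
      Complex.exp (y / 2 * Complex.I) * Complex.exp ((y - x) / 2 * Complex.I) := by
    rw [← Complex.exp_add, ← Complex.exp_add]
    ring_nf
  have hsin : Complex.exp ((y - x) / 2 * Complex.I) - Complex.exp (-((y - x) / 2) * Complex.I) =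
      2 * Complex.I * Complex.sin ((y - x) / 2) := by
    rw [mul_right_comm, Complex.two_sin, mul_assoc, Complex.I_mul_I]
    ring
  rw [hx, hy, ← mul_sub, hsin]
  ring

theorem det_vandermonde_exp_mul_I {N : ℕ} (x : Fin N → ℝ) :
    (vandermonde fun j ↦ Complex.exp (x j * Complex.I)).det =
      (2 * Complex.I) ^ N.choose 2 * (∏ j, Complex.exp (x j / 2 * Complex.I)) ^ (N - 1) *
        (∏ i, ∏ j ∈ Ioi i, Real.sin ((x j - x i) / 2) : ℝ) := by
  let u : Fin N → ℂ := fun j ↦ Complex.exp (x j / 2 * Complex.I)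
  have hphase : ∏ i, ∏ j ∈ Ioi i, u i * u j = (∏ j, u j) ^ (N - 1) := by
    rw [prod_prod_Ioi_mul_eq_prod_prod_off_diag fun _ j ↦ u j]
    simp [card_compl, prod_pow]
  calc
    _ = ∏ i, ∏ j ∈ Ioi i, 2 * Complex.I * (u i * u j) * Complex.sin ((x j - x i) / 2) := by
      simp only [det_vandermonde, exp_mul_I_sub_exp_mul_I, u]
    _ = (∏ i : Fin N, ∏ _j ∈ Ioi i, 2 * Complex.I) * (∏ i, ∏ j ∈ Ioi i, u i * u j) *
        ∏ i, ∏ j ∈ Ioi i, Complex.sin ((x j - x i) / 2) := by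
      simp only [prod_mul_distrib]
    _ = _ := by
      rw [hphase, prod_univ_prod_Ioi_const]
      push_cast
      rfl

theorem prod_prod_Ioi_sin_pos {N : ℕ} {a b : ℝ} (hab : b - a ≤ 2 * Real.pi) {x : Fin N → ℝ}
    (hx : StrictMono x) (hmem : ∀ j, x j ∈ Set.Ioo a b) :
    0 < ∏ i, ∏ j ∈ Ioi i, Real.sin ((x j - x i) / 2) := by
  refine prod_pos fun i _ ↦ prod_pos fun j hj ↦ ?_
  have hij : x i < x j := hx (mem_Ioi.mp hj)
  exact Real.sin_pos_of_pos_of_lt_pi (by linarith) (by linarith [(hmem i).1, (hmem j).2])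

end SineProduct

section BalancedCosSum

variable {ι : Type*} [Fintype ι] [DecidableEq ι] {n : ℕ}

/-- The sum of `cos ((∑ j ∈ S, x j - ∑ j ∉ S, x j) / 2)` over all `n`-element sets `S` of indices.
It is used for `2n` indices, where the splittings into `S` and its complement are balanced. -/
noncomputable def balancedCosSum (n : ℕ) (x : ι → ℝ) : ℝ :=
  ∑ S ∈ powersetCard n univ, Real.cos ((∑ j ∈ S, x j - ∑ j ∈ Sᶜ, x j) / 2)

theorem continuous_balancedCosSum (n : ℕ) : Continuous (balancedCosSum n : (ι → ℝ) → ℝ) := by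
  unfold balancedCosSum
  fun_prop

theorem balancedCosSum_const_pos (hι : Fintype.card ι = 2 * n) (c : ℝ) :
    0 < balancedCosSum n fun _ : ι ↦ c := by
  have hzero : ∀ S ∈ powersetCard n (univ : Finset ι),
      (∑ _j ∈ S, c - ∑ _j ∈ Sᶜ, c) / 2 = 0 := fun S hS ↦ by
    rw [mem_powersetCard_univ] at hS
    have hSc : #Sᶜ = n := by rw [card_compl]; lia
    simp [hS, hSc]
  rw [balancedCosSum, sum_congr rfl fun S hS ↦ congrArg Real.cos (hzero S hS)]
  simpa [hι] using Nat.choose_pos (Nat.le_mul_of_pos_left n two_pos)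

theorem sum_powersetCard_compl {M : Type*} [AddCommMonoid M] {k l : ℕ}
    (hι : Fintype.card ι = k + l) (f : Finset ι → M) :
    ∑ S ∈ powersetCard k univ, f Sᶜ = ∑ S ∈ powersetCard l univ, f S := by
  refine sum_nbij' compl compl ?_ ?_ (by simp) (by simp) (by simp) <;>
    simp only [mem_powersetCard_univ, card_compl] <;> lia

theorem sum_powersetCard_sin_eq_zero (hι : Fintype.card ι = 2 * n) (x : ι → ℝ) :
    ∑ S ∈ powersetCard n univ, Real.sin ((∑ j ∈ S, x j - ∑ j ∈ Sᶜ, x j) / 2) = 0 := by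
  have hodd (S : Finset ι) : Real.sin ((∑ j ∈ Sᶜ, x j - ∑ j ∈ Sᶜᶜ, x j) / 2) =
      -Real.sin ((∑ j ∈ S, x j - ∑ j ∈ Sᶜ, x j) / 2) := by
    rw [← Real.sin_neg, compl_compl, ← neg_div, neg_sub]
  have hsum := sum_powersetCard_compl (hι.trans (two_mul n))
    fun S ↦ Real.sin ((∑ j ∈ S, x j - ∑ j ∈ Sᶜ, x j) / 2)
  simp only [hodd, sum_neg_distrib] at hsum
  linarith

theorem prod_exp_mul_I (x : ι → ℝ) (S : Finset ι) :
    ∏ j ∈ S, Complex.exp (x j * Complex.I) = (∏ j, Complex.exp (x j / 2 * Complex.I)) *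
      Complex.exp (((∑ j ∈ S, x j - ∑ j ∈ Sᶜ, x j) / 2 : ℝ) * Complex.I) := by
  simp only [← Complex.exp_sum, ← Complex.exp_add, ← sum_mul, ← sum_div, ← add_mul]
  rw [← sum_add_sum_compl S]
  push_cast
  ring_nf

theorem esymm_exp_mul_I (hι : Fintype.card ι = 2 * n) (x : ι → ℝ) :
    (univ.val.map fun j ↦ Complex.exp (x j * Complex.I)).esymm n =
      (∏ j, Complex.exp (x j / 2 * Complex.I)) * balancedCosSum n x := by
  have himag := congrArg Complex.ofReal (sum_powersetCard_sin_eq_zero hι x)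
  rw [Complex.ofReal_sum, Complex.ofReal_zero] at himag
  simp only [esymm_map_val, prod_exp_mul_I, ← mul_sum]
  congr 1
  simp only [Complex.exp_mul_I, ← Complex.ofReal_cos, ← Complex.ofReal_sin, sum_add_distrib,
    ← sum_mul, himag]
  rw [balancedCosSum, Complex.ofReal_sum, zero_mul, add_zero]

theorem balancedCosSum_ne_zero (hι : Fintype.card ι = 2 * n) {a b : ℝ} (hab : b - a ≤ Real.pi)
    {x : ι → ℝ} (hx : ∀ j, x j ∈ Set.Ioo a b) : balancedCosSum n x ≠ 0 := by
  have hhalf : ∀ z ∈ univ.val.map fun j ↦ Complex.exp (x j * Complex.I),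
      z ∈ {z : ℂ | 0 < (Complex.exp (-((a + b) / 2 : ℝ) * Complex.I) * z).re} := by
    simp only [Multiset.mem_map, mem_val, mem_univ, true_and, forall_exists_index,
      forall_apply_eq_imp_iff, Set.mem_ofPred_eq]
    intro j
    rw [← Complex.exp_add, ← add_mul, ← Complex.ofReal_neg, ← Complex.ofReal_add,
      Complex.exp_ofReal_mul_I_re]
    exact Real.cos_pos_of_mem_Ioo ⟨by linarith [(hx j).1], by linarith [(hx j).2]⟩
  have hesymm := esymm_ne_zero_of_convex (k := n) (convex_setOf_re_mul_pos _) (by simp) hhalf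
    (by rw [Multiset.card_map, card_val, card_univ]; lia)
  rw [esymm_exp_mul_I hι] at hesymm
  exact_mod_cast right_ne_zero_of_mul hesymm

theorem balancedCosSum_pos (hι : Fintype.card ι = 2 * n) {a b : ℝ} (hab : b - a ≤ Real.pi)
    {x : ι → ℝ} (hx : ∀ j, x j ∈ Set.Ioo a b) : 0 < balancedCosSum n x := by
  by_contra! hneg
  have hconn : IsPreconnected (Set.univ.pi fun _ : ι ↦ Set.Ioo a b) :=
    (convex_pi fun _ _ ↦ convex_Ioo a b).isPreconnected
  have hmid : (fun _ ↦ (a + b) / 2) ∈ Set.univ.pi fun _ : ι ↦ Set.Ioo a b := fun j _ ↦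
    ⟨by linarith [(hx j).1, (hx j).2], by linarith [(hx j).1, (hx j).2]⟩
  obtain ⟨y, hy, hy0⟩ := hconn.intermediate_value (fun j _ ↦ hx j) hmid
    (continuous_balancedCosSum n).continuousOn ⟨hneg, (balancedCosSum_const_pos hι _).le⟩
  exact balancedCosSum_ne_zero hι hab (fun j ↦ hy j trivial) hy0

end BalancedCosSum

theorem two_mul_I_pow_choose (n : ℕ) :
    (2 * Complex.I)⁻¹ ^ n * (2 * Complex.I) ^ (2 * n).choose 2 = 4 ^ (n * (n - 1)) := by
  have hchoose : (2 * n).choose 2 = n + 2 * (n * (n - 1)) := by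
    rw [Nat.choose_two_right, mul_assoc, Nat.mul_div_cancel_left _ two_pos]
    cases n with
    | zero => rfl
    | succ n => rw [show 2 * (n + 1) - 1 = 1 + 2 * n by lia, Nat.add_sub_cancel]; ring
  have hsq : (2 * Complex.I) ^ 2 = -4 := by
    rw [mul_pow, Complex.I_sq]
    norm_num
  rw [hchoose, pow_add, inv_pow, inv_mul_cancel_left₀ (by simp), pow_mul, hsq,
    (Nat.even_mul_pred_self n).neg_pow]

theorem Phi_trigOmegaEven (n : ℕ) (x : Fin (2 * n) → ℝ) :
    Phi (trigOmegaEven n) x =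
      4 ^ (n * (n - 1)) * (∏ i, ∏ j ∈ Ioi i, Real.sin ((x j - x i) / 2)) *
        balancedCosSum n x := by
  let u : Fin (2 * n) → ℂ := fun j ↦ Complex.exp (x j / 2 * Complex.I)
  have hz (j : Fin (2 * n)) : Complex.exp (x j * Complex.I) = u j ^ 2 := by
    rw [← Complex.exp_nat_mul]
    push_cast
    ring_nf
  have hphase : (∏ j, Complex.exp (x j * Complex.I) ^ n)⁻¹ *
      ((∏ j, u j) ^ (2 * n - 1) * ∏ j, u j) = 1 := by
    rcases n.eq_zero_or_pos with rfl | hn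
    · simp
    · have hu : ∏ j, u j ≠ 0 := prod_ne_zero_iff.mpr fun j _ ↦ Complex.exp_ne_zero _
      simp only [hz, ← pow_mul, prod_pow]
      rw [pow_sub_one_mul (by lia), inv_mul_cancel₀ (pow_ne_zero _ hu)]
  have hPhi := ofReal_Phi_trigOmegaEven x
  rw [det_zpow_alternatingFreq _ fun j ↦ Complex.exp_ne_zero _, det_vandermonde_exp_mul_I,
    esymm_exp_mul_I (Fintype.card_fin _)] at hPhi
  apply Complex.ofReal_injective
  rw [hPhi]
  push_cast
  rw [← two_mul_I_pow_choose]
  linear_combination ((2 * Complex.I)⁻¹ ^ n * (2 * Complex.I) ^ (2 * n).choose 2 *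
    (∏ i, ∏ j ∈ Ioi i, Complex.sin ((x j - x i) / 2)) * balancedCosSum n x) * hphase

/-- The `2n`-dimensional trigonometric system `(cos x, sin x, …, cos nx, sin nx)` is a
positive Chebyshev system over any open interval of length at most `π`: for all
`x₁ < ⋯ < x_{2n}` in the interval, `det(ωᵢ(xⱼ))` is positive. -/
theorem trigOmegaEven_posChebyshev (n : ℕ) (hn : 0 < n) :
    ∀ a b : ℝ, b - a ≤ Real.pi →
      IsPosChebyshev (trigOmegaEven n) (Set.Ioo a b) := by
  intro a b hab x hx hmem
  have hsin : 0 < ∏ i, ∏ j ∈ Ioi i, Real.sin ((x j - x i) / 2) :=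
    prod_prod_Ioi_sin_pos (by linarith [Real.pi_pos]) hx hmem
  have hcos : 0 < balancedCosSum n x := balancedCosSum_pos (Fintype.card_fin _) hab hmem
  rw [Phi_trigOmegaEven]
  positivity
end
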